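/- In the correlated lognormal futures model, the quanto option price C(x,y) = ∫∫ g(F^E(x,u))·h(F^I(y,u,v)) dμ(u,v) has a mixed second partial derivative in the two initial prices (the cross-gamma Δ_{EI} = ∂²C/∂x∂y) at every x > 0, y > 0, given by Δ_{EI} = ∫∫ g(F^E(x,u))·h(F^I(y,u,v)) · [ (u − ρ·v/√(1−ρ²))·v/(x·y·σ_E·σ_I·√(1−ρ²)·T²) + ρ/(x·y·σ_E·σ_I·(1−ρ²)·T) ] dμ(u,v); that is, the cross-gamma Malliavin weight is the product of the energy-delta weight (u − (ρ/√(1−ρ²))v)/(x σ_E T) and the temperature-delta weight v/(y σ_I √(1−ρ²) T), plus the Skorohod correction term ρ/(x y σ_E σ_I (1−ρ²) T) coming from the Malliavin derivative of the energy-delta weight in the W̃^I direction. -/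

import Mathlib

open MeasureTheory ProbabilityTheory

/-!
A relative bump `x ↦ x * exp r`, `y ↦ y * exp q` of the initial prices amounts to translating the
Gaussian noise by `r • k + q • l`, where `k` moves only the energy price and `l` only the
temperature price. The Cameron–Martin theorem turns a translation into an exponential density, so
that the price is smooth in `r` and `q` although the payoff is not, and the `r`-derivative inserts
the centred weight `X` dual to `k`. This weight is itself moved by the translation along `l`, so
that the `q`-derivative inserts the dual weight `Y` and the Skorohod correction `-X l`.
-/

section ExponentialFamily

theorem abs_mul_exp_mul_le {ε s t : ℝ} (hε : 0 < ε) (hst : |s - t| ≤ ε) (x : ℝ) :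
    |x| * Real.exp (s * x) ≤
      ε⁻¹ * (Real.exp ((t + 2 * ε) * x) + Real.exp ((t - 2 * ε) * x)) := by
  have hx : ε * |x| ≤ Real.exp (ε * |x|) := (lt_add_one _).le.trans (Real.add_one_le_exp _)
  have hsx : s * x ≤ t * x + ε * |x| := by
    have := (le_abs_self ((s - t) * x)).trans_eq (abs_mul _ _)
    linarith [mul_le_mul_of_nonneg_right hst (abs_nonneg x)]
  rw [le_inv_mul_iff₀ hε]
  calc ε * (|x| * Real.exp (s * x))
      = ε * |x| * Real.exp (s * x) := by ring
    _ ≤ Real.exp (ε * |x|) * Real.exp (t * x + ε * |x|) := by gcongr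
    _ = Real.exp (t * x) * Real.exp |2 * ε * x| := by
        rw [abs_mul, abs_of_pos (by positivity : 0 < 2 * ε), ← Real.exp_add, ← Real.exp_add]
        ring_nf
    _ ≤ Real.exp (t * x) * (Real.exp (2 * ε * x) + Real.exp (-(2 * ε * x))) := by
        gcongr
        exact Real.exp_abs_le _
    _ = Real.exp ((t + 2 * ε) * x) + Real.exp ((t - 2 * ε) * x) := by
        rw [mul_add, ← Real.exp_add, ← Real.exp_add]
        ring_nf

theorem hasDerivAt_integral_exp_mul_smul {Ω F : Type*} [MeasurableSpace Ω] {μ : Measure Ω}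
    [NormedAddCommGroup F] [NormedSpace ℝ F] {X : Ω → ℝ} {H : Ω → F} {t : ℝ}
    (hX : AEMeasurable X μ) (hH : AEStronglyMeasurable H μ)
    (ht : t ∈ interior {s | Integrable (fun ω ↦ Real.exp (s * X ω) • H ω) μ}) :
    HasDerivAt (fun s ↦ ∫ ω, Real.exp (s * X ω) • H ω ∂μ)
      (∫ ω, (X ω * Real.exp (t * X ω)) • H ω ∂μ) t := by
  obtain ⟨δ, hδ, hsub⟩ := Metric.nhds_basis_closedBall.mem_iff.1 (mem_interior_iff_mem_nhds.1 ht)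
  obtain ⟨ε, hε, rfl⟩ : ∃ ε > 0, δ = 2 * ε := ⟨δ / 2, by positivity, by ring⟩
  have h_int {s : ℝ} (hs : |s - t| ≤ 2 * ε) : Integrable (fun ω ↦ Real.exp (s * X ω) • H ω) μ :=
    hsub (by rwa [Metric.mem_closedBall, Real.dist_eq])
  have h_bound : Integrable (fun ω ↦ ε⁻¹ * (‖Real.exp ((t + 2 * ε) * X ω) • H ω‖ +
      ‖Real.exp ((t - 2 * ε) * X ω) • H ω‖)) μ := by
    refine ((h_int ?_).norm.add (h_int ?_).norm).const_mul _ <;> simp [abs_of_pos hε]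
  refine (hasDerivAt_integral_of_dominated_loc_of_deriv_le (Metric.closedBall_mem_nhds t hε)
    (F' := fun s ω ↦ (X ω * Real.exp (s * X ω)) • H ω) (.of_forall fun s ↦ by fun_prop)
    (h_int (by simpa using hε.le)) (by fun_prop) (.of_forall fun ω s hs ↦ ?_) h_bound
    (.of_forall fun ω s _ ↦ ?_)).2
  · rw [Metric.mem_closedBall, Real.dist_eq] at hs
    simp only [norm_smul, norm_mul, Real.norm_eq_abs, Real.abs_exp]
    rw [← add_mul, ← mul_assoc]
    exact mul_le_mul_of_nonneg_right (abs_mul_exp_mul_le hε hs _) (norm_nonneg _)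
  · simpa [mul_comm] using ((hasDerivAt_mul_const (x := s) (X ω)).exp).smul_const (H ω)

end ExponentialFamily

section CameronMartin

variable {E E' F : Type*} [NormedAddCommGroup E] [NormedSpace ℝ E] [MeasurableSpace E]
  [NormedAddCommGroup E'] [NormedSpace ℝ E'] [MeasurableSpace E']
  [NormedAddCommGroup F] [NormedSpace ℝ F]
  {μ : Measure E} {ν : Measure E'} {L : StrongDual ℝ E} {k : E} {L' : StrongDual ℝ E'} {k' : E'}

/-- `k` is the Cameron–Martin vector of the functional `L` under `μ`, i.e. the image of `L` under
the covariance operator of `μ`, characterised by testing against all continuous functionals. -/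
def IsCameronMartinVector (μ : Measure E) (L : StrongDual ℝ E) (k : E) : Prop :=
  ∀ M : StrongDual ℝ E, M k = cov[M, L; μ]

theorem integrable_exp_dual [BorelSpace E] [IsGaussian μ] (L : StrongDual ℝ E) :
    Integrable (fun w ↦ Real.exp (L w)) μ := by
  have h := integrable_exp_mul_gaussianReal (μ := μ[L]) (v := Var[L; μ].toNNReal) 1
  rw [← IsGaussian.map_eq_gaussianReal L, integrable_map_measure (by fun_prop) (by fun_prop)] at h
  simpa only [Function.comp_def, one_mul] using h

theorem mgf_dual [BorelSpace E] [IsGaussian μ] (L : StrongDual ℝ E) (t : ℝ) :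
    mgf L μ t = Real.exp (μ[L] * t + Var[L; μ] * t ^ 2 / 2) := by
  rw [mgf_gaussianReal (IsGaussian.map_eq_gaussianReal L),
    Real.coe_toNNReal _ (variance_nonneg _ _)]

namespace IsCameronMartinVector

theorem const_smul (hk : IsCameronMartinVector μ L k) (r : ℝ) :
    IsCameronMartinVector μ (r • L) (r • k) := fun M ↦ by
  rw [map_smul, hk M, smul_eq_mul]
  exact (covariance_const_mul_right r).symm

theorem prod [BorelSpace E] [BorelSpace E'] [IsGaussian μ] [IsGaussian ν]
    (h : IsCameronMartinVector μ L k) (h' : IsCameronMartinVector ν L' k') :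
    IsCameronMartinVector (μ.prod ν) (L.coprod L') (k, k') := fun M ↦ by
  obtain ⟨A, B, rfl⟩ : ∃ A B, M = ContinuousLinearMap.coprod A B :=
    ⟨_, _, M.coprod_comp_inl_inr.symm⟩
  have mem_fst (A : StrongDual ℝ E) : MemLp (fun w : E × E' ↦ A w.1) 2 (μ.prod ν) :=
    (IsGaussian.memLp_dual μ A 2 (by simp)).comp_fst ν
  have mem_snd (B : StrongDual ℝ E') : MemLp (fun w : E × E' ↦ B w.2) 2 (μ.prod ν) :=
    (IsGaussian.memLp_dual ν B 2 (by simp)).comp_snd μ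
  have fst_snd (A : StrongDual ℝ E) (B : StrongDual ℝ E') :
      cov[fun w ↦ A w.1, fun w ↦ B w.2; μ.prod ν] = 0 :=
    covariance_fst_snd_prod (IsGaussian.memLp_dual μ A 2 (by simp))
      (IsGaussian.memLp_dual ν B 2 (by simp))
  have snd_fst : cov[fun w ↦ B w.2, fun w ↦ L w.1; μ.prod ν] = 0 := by
    rw [covariance_comm, fst_snd]
  have fst_fst : cov[fun w ↦ A w.1, fun w ↦ L w.1; μ.prod ν] = cov[A, L; μ] := by
    rw [← covariance_map_fun (Z := Prod.fst) (by fun_prop) (by fun_prop) (by fun_prop),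
      Measure.map_fst_prod, measure_univ, one_smul]
  have snd_snd : cov[fun w ↦ B w.2, fun w ↦ L' w.2; μ.prod ν] = cov[B, L'; ν] := by
    rw [← covariance_map_fun (Z := Prod.snd) (by fun_prop) (by fun_prop) (by fun_prop),
      Measure.map_snd_prod, measure_univ, one_smul]
  calc (A.coprod B) (k, k') = cov[A, L; μ] + cov[B, L'; ν] := by
        rw [ContinuousLinearMap.coprod_apply, h A, h' B]
    _ = cov[(fun w ↦ A w.1) + fun w ↦ B w.2, (fun w ↦ L w.1) + fun w ↦ L' w.2; μ.prod ν] := by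
        rw [covariance_add_left (mem_fst A) (mem_snd B) ((mem_fst L).add (mem_snd L')),
          covariance_add_right (mem_fst A) (mem_fst L) (mem_snd L'),
          covariance_add_right (mem_snd B) (mem_fst L) (mem_snd L'), fst_snd, snd_fst, fst_fst,
          snd_snd, add_zero, zero_add]
    _ = cov[A.coprod B, L.coprod L'; μ.prod ν] := rfl

theorem of_gaussianReal (m : ℝ) (v : NNReal) (L : StrongDual ℝ ℝ) :
    IsCameronMartinVector (gaussianReal m v) L (v * L 1) := fun M ↦ by
  have eq_smul_id (M : StrongDual ℝ ℝ) : ⇑M = M 1 • id := by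
    ext z
    rw [Pi.smul_apply, smul_eq_mul, mul_comm, id, ← smul_eq_mul, ← map_smul, smul_eq_mul, mul_one]
  rw [eq_smul_id M, eq_smul_id L, covariance_smul_left, covariance_smul_right,
    covariance_self (by fun_prop), variance_id_gaussianReal]
  simp only [Pi.smul_apply, id, smul_eq_mul]
  ring

theorem of_gaussianReal_prod (m m' : ℝ) {v v' : NNReal} (hv : v ≠ 0) (hv' : v' ≠ 0) (k : ℝ × ℝ) :
    IsCameronMartinVector ((gaussianReal m v).prod (gaussianReal m' v'))
      ((k.1 / v) • ContinuousLinearMap.fst ℝ ℝ ℝ + (k.2 / v') • ContinuousLinearMap.snd ℝ ℝ ℝ)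
      k := by
  convert (of_gaussianReal m v ((k.1 / v) • .id ℝ ℝ)).prod
    (of_gaussianReal m' v' ((k.2 / v') • .id ℝ ℝ)) using 1
  · ext <;> simp
  · ext <;> simp [mul_div_cancel₀, hv, hv']

theorem mgf_tilted [BorelSpace E] [IsGaussian μ] (hk : IsCameronMartinVector μ L k)
    (M : StrongDual ℝ E) : mgf M (μ.tilted L) = mgf (fun w ↦ M w + M k) μ := by
  have memLp_dual (M : StrongDual ℝ E) : MemLp M 2 μ := IsGaussian.memLp_dual μ M 2 (by simp)
  ext t
  have h_mean : μ[L + t • M] = μ[L] + t * μ[M] := by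
    rw [← integral_const_mul, ← integral_add (by fun_prop) (by fun_prop)]
    rfl
  have h_var : Var[L + t • M; μ] = Var[L; μ] + 2 * (t * M k) + t ^ 2 * Var[M; μ] := by
    change Var[⇑L + t • ⇑M; μ] = _
    rw [variance_add (memLp_dual L) ((memLp_dual M).const_smul t), covariance_smul_right,
      covariance_comm, ← hk M, variance_smul]
  calc mgf M (μ.tilted L) t = mgf (L + t • M) μ 1 / mgf L μ 1 := by
        simp only [mgf, one_mul]
        exact integral_exp_tilted L (t • M)
    _ = Real.exp (t * M k) * mgf M μ t := by
        simp only [mgf_dual]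
        rw [h_mean, h_var, ← Real.exp_sub, ← Real.exp_add]
        ring_nf
    _ = mgf (fun w ↦ M w + M k) μ t := by rw [mgf_add_const, mul_comm]

theorem map_add_right [BorelSpace E] [SecondCountableTopology E] [CompleteSpace E] [IsGaussian μ]
    (hk : IsCameronMartinVector μ L k) : μ.map (· + k) = μ.tilted L := by
  have : IsProbabilityMeasure (μ.tilted L) := isProbabilityMeasure_tilted (integrable_exp_dual L)
  refine Measure.ext_of_charFunDual (funext fun M ↦ ?_)
  have h_set : integrableExpSet (fun w ↦ M w + M k) μ = Set.univ := by
    refine Set.eq_univ_of_forall fun t ↦ ?_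
    have h := (integrable_exp_dual (μ := μ) (t • M)).mul_const (Real.exp (t * M k))
    simp only [integrableExpSet, Set.mem_ofPred_eq, mul_add, Real.exp_add]
    exact h
  calc charFunDual (μ.map (· + k)) M = complexMGF (fun w ↦ M w + M k) μ Complex.I := by
        rw [charFunDual_apply, integral_map (by fun_prop) (by fun_prop), complexMGF]
        simp only [map_add, mul_comm]
    _ = complexMGF M (μ.tilted L) Complex.I :=
        eqOn_complexMGF_of_mgf (hk.mgf_tilted M).symm (by simp [h_set])
    _ = charFunDual (μ.tilted L) M := by simp only [charFunDual_apply, complexMGF, mul_comm]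

theorem integral_comp_add_right [BorelSpace E] [SecondCountableTopology E] [CompleteSpace E]
    [IsGaussian μ] (hk : IsCameronMartinVector μ L k) (G : E → F) :
    ∫ w, G (w + k) ∂μ = ∫ w, Real.exp (L w - (μ[L] + L k / 2)) • G w ∂μ := by
  have h_exp : ∫ w, Real.exp (L w) ∂μ = Real.exp (μ[L] + L k / 2) := by
    have h := mgf_dual (μ := μ) L 1
    simpa only [mgf, one_mul, mul_one, one_pow, hk L,
      covariance_self L.continuous.aemeasurable] using h
  rw [← (measurableEmbedding_addRight k).integral_map, hk.map_add_right, integral_tilted]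
  simp only [h_exp, Real.exp_sub]

end IsCameronMartinVector

end CameronMartin

section ExponentialGrowth

variable {E E' F : Type*} [NormedAddCommGroup E] [NormedAddCommGroup E'] [NormedAddCommGroup F]

/-- `G` grows at most exponentially in the norm. This class contains polynomially growing payoffs
of lognormal prices, is stable under translation and multiplication by linear functionals, and is
integrable under every Gaussian measure. -/
def HasExpGrowth (G : E → F) : Prop :=
  ∃ A B : NNReal, ∀ w, ‖G w‖ ≤ A * Real.exp (B * ‖w‖)

namespace HasExpGrowth

theorem comp_of_norm_le_pow {Z : E → E'} {Φ : E' → F} {C : ℝ} {p : ℕ}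
    (hΦ : ∀ z, ‖Φ z‖ ≤ C * (1 + ‖z‖) ^ p) (hZ : HasExpGrowth Z) :
    HasExpGrowth (fun w ↦ Φ (Z w)) := by
  obtain ⟨A, B, hAB⟩ := hZ
  refine ⟨C.toNNReal * (1 + A) ^ p, p * B, fun w ↦ (hΦ _).trans ?_⟩
  have h_one : 1 ≤ Real.exp (B * ‖w‖) := Real.one_le_exp (by positivity)
  calc C * (1 + ‖Z w‖) ^ p
      ≤ C.toNNReal * (Real.exp (B * ‖w‖) + A * Real.exp (B * ‖w‖)) ^ p := by
        gcongr
        exacts [Real.le_coe_toNNReal C, hAB w]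
    _ = ↑(C.toNNReal * (1 + A) ^ p) * Real.exp (↑(p * B) * ‖w‖) := by
        push_cast
        rw [← one_add_mul, mul_pow, ← Real.exp_nat_mul]
        ring_nf

theorem prodMk {G : E → E'} {H : E → F} (hG : HasExpGrowth G) (hH : HasExpGrowth H) :
    HasExpGrowth (fun w ↦ (G w, H w)) := by
  obtain ⟨A, B, hAB⟩ := hG
  obtain ⟨A', B', hAB'⟩ := hH
  refine ⟨max A A', max B B', fun w ↦ ?_⟩
  rw [Prod.norm_mk, sup_le_iff]
  constructor
  · grw [hAB w, ← le_max_left A A', ← le_max_left B B']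
  · grw [hAB' w, ← le_max_right A A', ← le_max_right B B']

theorem smul [NormedSpace ℝ F] {Z : E → ℝ} {G : E → F} (hZ : HasExpGrowth Z)
    (hG : HasExpGrowth G) : HasExpGrowth (fun w ↦ Z w • G w) := by
  obtain ⟨A, B, hAB⟩ := hZ
  obtain ⟨A', B', hAB'⟩ := hG
  refine ⟨A * A', B + B', fun w ↦ ?_⟩
  calc ‖Z w • G w‖ ≤ A * Real.exp (B * ‖w‖) * (A' * Real.exp (B' * ‖w‖)) := by
        grw [norm_smul, hAB w, hAB' w]
    _ = ↑(A * A') * Real.exp (↑(B + B') * ‖w‖) := by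
        push_cast
        rw [add_mul, Real.exp_add]
        ring

theorem comp_add_right {G : E → F} (hG : HasExpGrowth G) (k : E) :
    HasExpGrowth (fun w ↦ G (w + k)) := by
  obtain ⟨A, B, hAB⟩ := hG
  refine ⟨A * (Real.exp (B * ‖k‖)).toNNReal, B, fun w ↦ (hAB _).trans ?_⟩
  rw [NNReal.coe_mul, Real.coe_toNNReal _ (Real.exp_nonneg _), mul_assoc, ← Real.exp_add,
    ← mul_add, add_comm ‖k‖]
  grw [norm_add_le w k]

theorem dual_sub_const [NormedSpace ℝ E] (L : StrongDual ℝ E) (c : ℝ) :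
    HasExpGrowth (fun w ↦ L w - c) := by
  refine ⟨‖L‖₊ + ‖c‖₊, 1, fun w ↦ ?_⟩
  have h_one : 1 ≤ Real.exp ‖w‖ := Real.one_le_exp (norm_nonneg w)
  have h_norm : ‖w‖ ≤ Real.exp ‖w‖ := by linarith [Real.add_one_le_exp ‖w‖]
  calc ‖L w - c‖ ≤ ‖L‖ * ‖w‖ + ‖c‖ * 1 := by grw [norm_sub_le, L.le_opNorm w, mul_one]
    _ ≤ ‖L‖ * Real.exp ‖w‖ + ‖c‖ * Real.exp ‖w‖ := by gcongr
    _ = ↑(‖L‖₊ + ‖c‖₊) * Real.exp (↑(1 : NNReal) * ‖w‖) := by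
        push_cast
        ring_nf

theorem const_mul_exp_dual_sub [NormedSpace ℝ E] (x : ℝ) (L : StrongDual ℝ E) (c : ℝ) :
    HasExpGrowth (fun w ↦ x * Real.exp (L w - c)) := by
  refine ⟨‖x * Real.exp (-c)‖₊, ‖L‖₊, fun w ↦ ?_⟩
  calc ‖x * Real.exp (L w - c)‖ = ‖x * Real.exp (-c)‖ * Real.exp (L w) := by
        rw [sub_eq_neg_add, Real.exp_add, ← mul_assoc, norm_mul, Real.norm_eq_abs (Real.exp _),
          Real.abs_exp]
    _ ≤ ‖x * Real.exp (-c)‖ * Real.exp (‖L‖ * ‖w‖) := by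
        gcongr
        exact (le_abs_self _).trans (L.le_opNorm w)

theorem integrable [NormedSpace ℝ E] [MeasurableSpace E] [BorelSpace E]
    [SecondCountableTopology E] [CompleteSpace E] {μ : Measure E} [IsGaussian μ] {G : E → F}
    (hG : HasExpGrowth G) (hGm : AEStronglyMeasurable G μ) : Integrable G μ := by
  obtain ⟨A, B, hAB⟩ := hG
  obtain ⟨C, hC, h_fernique⟩ := IsGaussian.exists_integrable_exp_sq μ
  refine (h_fernique.const_mul (A * Real.exp (B ^ 2 / (4 * C)))).mono' hGm (.of_forall fun w ↦ ?_)
  have h_young : B * ‖w‖ ≤ B ^ 2 / (4 * C) + C * ‖w‖ ^ 2 := by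
    have h : B ^ 2 / (4 * C) + C * ‖w‖ ^ 2 - B * ‖w‖ = (B - 2 * C * ‖w‖) ^ 2 / (4 * C) := by
      field_simp
      ring
    linarith [show 0 ≤ (B - 2 * C * ‖w‖) ^ 2 / (4 * C) by positivity]
  calc ‖G w‖ ≤ A * Real.exp (B ^ 2 / (4 * C) + C * ‖w‖ ^ 2) := by grw [hAB w, h_young]
    _ = A * Real.exp (B ^ 2 / (4 * C)) * Real.exp (C * ‖w‖ ^ 2) := by
        rw [Real.exp_add, mul_assoc]

end HasExpGrowth

end ExponentialGrowth

section GaussianIntegrationByParts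

variable {E F : Type*} [NormedAddCommGroup E] [NormedSpace ℝ E] [MeasurableSpace E]
  [BorelSpace E] [SecondCountableTopology E] [CompleteSpace E]
  [NormedAddCommGroup F] [NormedSpace ℝ F] {μ : Measure E} [IsGaussian μ]
  {X Y : StrongDual ℝ E} {k l : E} {G : E → F}

theorem IsCameronMartinVector.hasDerivAt_integral_translate (hk : IsCameronMartinVector μ X k)
    (hGm : AEStronglyMeasurable G μ) (hG : HasExpGrowth G) :
    HasDerivAt (fun r : ℝ ↦ ∫ w, G (w + r • k) ∂μ) (∫ w, (X w - μ[X]) • G w ∂μ) 0 := by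
  have h_int (s : ℝ) : Integrable (fun w ↦ Real.exp (s * (X w - μ[X])) • G w) μ := by
    have h_exp := HasExpGrowth.const_mul_exp_dual_sub 1 (s • X) (s * μ[X])
    refine HasExpGrowth.integrable (.smul ?_ hG) (by fun_prop)
    simpa [mul_sub] using h_exp
  have h_deriv := hasDerivAt_integral_exp_mul_smul (X := fun w ↦ X w - μ[X]) (t := 0)
    (by fun_prop) hGm (by simp [h_int])
  have h_gauss : HasDerivAt (fun r : ℝ ↦ Real.exp (-(X k / 2) * r ^ 2)) 0 0 := by
    simpa using ((hasDerivAt_pow 2 (0 : ℝ)).const_mul (-(X k / 2))).exp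
  convert h_gauss.smul h_deriv using 1
  · ext r
    rw [(hk.const_smul r).integral_comp_add_right, Pi.smul_apply', ← integral_smul]
    refine integral_congr_ae (.of_forall fun w ↦ ?_)
    simp only [smul_smul, ← Real.exp_add, FunLike.coe_smul, Pi.smul_apply, smul_eq_mul, map_smul,
      integral_const_mul]
    ring_nf
  · simp

theorem IsCameronMartinVector.hasDerivAt_integral_smul_translate (hl : IsCameronMartinVector μ Y l)
    (X : StrongDual ℝ E) (c : ℝ) (hGm : StronglyMeasurable G) (hG : HasExpGrowth G) :
    HasDerivAt (fun q : ℝ ↦ ∫ w, (X w - c) • G (w + q • l) ∂μ)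
      (∫ w, ((X w - c) * (Y w - μ[Y]) - X l) • G w ∂μ) 0 := by
  set H : E → F := fun w ↦ (X w - c) • G w with hH_def
  have hHm : StronglyMeasurable H := .smul (by fun_prop) hGm
  have hH : HasExpGrowth H := (HasExpGrowth.dual_sub_const X c).smul hG
  have h_int {K : E → F} (hKm : StronglyMeasurable K) (hK : HasExpGrowth K) (q : ℝ) :
      Integrable (fun w ↦ K (w + q • l)) μ :=
    (hK.comp_add_right _).integrable (hKm.comp_measurable (by fun_prop)).aestronglyMeasurable
  have h_split (q : ℝ) : ∫ w, (X w - c) • G (w + q • l) ∂μ =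
      ∫ w, H (w + q • l) ∂μ - (q * X l) • ∫ w, G (w + q • l) ∂μ := by
    rw [← integral_smul, ← integral_sub (h_int hHm hH q) ((h_int hGm hG q).fun_smul _)]
    refine integral_congr_ae (.of_forall fun w ↦ ?_)
    simp only [hH_def, ← sub_smul, map_add, map_smul, smul_eq_mul]
    ring_nf
  have h_deriv := (hl.hasDerivAt_integral_translate hHm.aestronglyMeasurable hH).sub
    ((hasDerivAt_mul_const (x := 0) (X l)).smul
      (hl.hasDerivAt_integral_translate hGm.aestronglyMeasurable hG))
  convert h_deriv using 1
  · exact funext h_split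
  · have hYH : Integrable (fun w ↦ (Y w - μ[Y]) • H w) μ :=
      ((HasExpGrowth.dual_sub_const Y _).smul hH).integrable (by fun_prop)
    have hGi : Integrable G μ := hG.integrable hGm.aestronglyMeasurable
    simp only [zero_mul, zero_smul, zero_add, add_zero]
    rw [← integral_smul, ← integral_sub hYH (hGi.fun_smul _)]
    refine integral_congr_ae (.of_forall fun w ↦ ?_)
    simp only [hH_def, smul_smul, ← sub_smul]
    ring_nf

end GaussianIntegrationByParts

theorem hasDerivAt_of_comp_mul_exp {F : Type*} [NormedAddCommGroup F] [NormedSpace ℝ F]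
    {f : ℝ → F} {f' : F} {x : ℝ} (hx : x ≠ 0)
    (hf : HasDerivAt (fun r ↦ f (x * Real.exp r)) f' 0) : HasDerivAt f (x⁻¹ • f') x := by
  have h_log : HasDerivAt (fun z ↦ Real.log (z / x)) x⁻¹ x := by
    simpa [hx] using ((hasDerivAt_id x).div_const x).log (by simp [hx])
  have h_comp := HasDerivAt.scomp x (by simpa [hx] using hf) h_log
  refine h_comp.congr_of_eventuallyEq ?_
  have h_pos : ∀ᶠ z in nhds x, 0 < z / x :=
    (continuousAt_id.div_const x).eventually (lt_mem_nhds (by simp [hx]))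
  filter_upwards [h_pos] with z hz
  simp [Real.exp_log hz, mul_div_cancel₀ _ hx]

section Lognormal

variable {E F : Type*} [NormedAddCommGroup E] [NormedSpace ℝ E] [NormedAddCommGroup F]
  {β β' X Y : StrongDual ℝ E} {a b x y : ℝ} {k l : E}

/-- The terminal price of a lognormal asset with initial price `x`, as a function of the Gaussian
noise `w`: the log-return is `β w - a`, where `a` is the drift correction. -/
noncomputable def lognormalPrice (β : StrongDual ℝ E) (a x : ℝ) (w : E) : ℝ :=
  x * Real.exp (β w - a)

theorem lognormalPrice_add_smul (β : StrongDual ℝ E) (a x r : ℝ) (w k : E) :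
    lognormalPrice β a x (w + r • k) = lognormalPrice β a (x * Real.exp (r * β k)) w := by
  rw [lognormalPrice, lognormalPrice, mul_assoc, ← Real.exp_add, map_add, map_smul, smul_eq_mul]
  ring_nf

/-- The terminal prices of two lognormal assets driven by the same noise. -/
noncomputable def lognormalPair (β β' : StrongDual ℝ E) (a b x y : ℝ) (w : E) : ℝ × ℝ :=
  (lognormalPrice β a x w, lognormalPrice β' b y w)

theorem lognormalPair_add_smul_fst (hβk : β k = 1) (hβ'k : β' k = 0) (r : ℝ) (w : E) :
    lognormalPair β β' a b x y (w + r • k) = lognormalPair β β' a b (x * Real.exp r) y w := by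
  simp only [lognormalPair, lognormalPrice_add_smul, hβk, hβ'k, mul_one, mul_zero, Real.exp_zero]

theorem lognormalPair_add_smul_snd (hβl : β l = 0) (hβ'l : β' l = 1) (q : ℝ) (w : E) :
    lognormalPair β β' a b x y (w + q • l) = lognormalPair β β' a b x (y * Real.exp q) w := by
  simp only [lognormalPair, lognormalPrice_add_smul, hβl, hβ'l, mul_one, mul_zero, Real.exp_zero]

theorem hasExpGrowth_comp_lognormalPair {Φ : ℝ × ℝ → F} {C : ℝ} {p : ℕ}
    (hΦ : ∀ z, ‖Φ z‖ ≤ C * (1 + ‖z‖) ^ p) :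
    HasExpGrowth (fun w ↦ Φ (lognormalPair β β' a b x y w)) :=
  .comp_of_norm_le_pow hΦ (.prodMk (.const_mul_exp_dual_sub x β a) (.const_mul_exp_dual_sub y β' b))

variable [MeasurableSpace E] [BorelSpace E]

theorem measurable_lognormalPair : Measurable (lognormalPair β β' a b x y) := by
  unfold lognormalPair lognormalPrice
  fun_prop

variable [SecondCountableTopology E] [CompleteSpace E] [NormedSpace ℝ F] {μ : Measure E}
  [IsGaussian μ] {Φ : ℝ × ℝ → F} {C : ℝ} {p : ℕ}

theorem hasDerivAt_integral_lognormalPair_fst (hk : IsCameronMartinVector μ X k) (hβk : β k = 1)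
    (hβ'k : β' k = 0) (hx : x ≠ 0) (hΦm : StronglyMeasurable Φ)
    (hΦ : ∀ z, ‖Φ z‖ ≤ C * (1 + ‖z‖) ^ p) :
    HasDerivAt (fun x' ↦ ∫ w, Φ (lognormalPair β β' a b x' y w) ∂μ)
      (x⁻¹ • ∫ w, (X w - μ[X]) • Φ (lognormalPair β β' a b x y w) ∂μ) x := by
  refine hasDerivAt_of_comp_mul_exp hx ?_
  simpa only [lognormalPair_add_smul_fst hβk hβ'k] using hk.hasDerivAt_integral_translate
    (G := fun w ↦ Φ (lognormalPair β β' a b x y w))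
    (hΦm.comp_measurable measurable_lognormalPair).aestronglyMeasurable
    (hasExpGrowth_comp_lognormalPair hΦ)

theorem hasDerivAt_integral_smul_lognormalPair_snd (hl : IsCameronMartinVector μ Y l)
    (hβl : β l = 0) (hβ'l : β' l = 1) (hy : y ≠ 0) (hΦm : StronglyMeasurable Φ)
    (hΦ : ∀ z, ‖Φ z‖ ≤ C * (1 + ‖z‖) ^ p) (X : StrongDual ℝ E) (c : ℝ) :
    HasDerivAt (fun y' ↦ ∫ w, (X w - c) • Φ (lognormalPair β β' a b x y' w) ∂μ)
      (y⁻¹ • ∫ w, ((X w - c) * (Y w - μ[Y]) - X l) • Φ (lognormalPair β β' a b x y w) ∂μ) y := by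
  refine hasDerivAt_of_comp_mul_exp hy ?_
  simpa only [lognormalPair_add_smul_snd hβl hβ'l] using hl.hasDerivAt_integral_smul_translate X c
    (G := fun w ↦ Φ (lognormalPair β β' a b x y w)) (hΦm.comp_measurable measurable_lognormalPair)
    (hasExpGrowth_comp_lognormalPair hΦ)

theorem hasDerivAt_deriv_integral_lognormalPair (hk : IsCameronMartinVector μ X k)
    (hl : IsCameronMartinVector μ Y l) (hβk : β k = 1) (hβ'k : β' k = 0) (hβl : β l = 0)
    (hβ'l : β' l = 1) (hx : x ≠ 0) (hy : y ≠ 0) (hΦm : StronglyMeasurable Φ)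
    (hΦ : ∀ z, ‖Φ z‖ ≤ C * (1 + ‖z‖) ^ p) :
    HasDerivAt (fun y' ↦ deriv (fun x' ↦ ∫ w, Φ (lognormalPair β β' a b x' y' w) ∂μ) x)
      (x⁻¹ • y⁻¹ • ∫ w, ((X w - μ[X]) * (Y w - μ[Y]) - X l) •
        Φ (lognormalPair β β' a b x y w) ∂μ) y := by
  simp only [fun y' ↦ (hasDerivAt_integral_lognormalPair_fst (y := y') (a := a) (b := b)
    hk hβk hβ'k hx hΦm hΦ).deriv]
  exact (hasDerivAt_integral_smul_lognormalPair_snd hl hβl hβ'l hy hΦm hΦ X _).const_smul x⁻¹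

end Lognormal

theorem norm_mul_le_mul_pow_norm {E E' R : Type*} [SeminormedAddCommGroup E]
    [SeminormedAddCommGroup E'] [NonUnitalSeminormedRing R] {g : E → R} {h : E' → R}
    {C D : ℝ} {p q : ℕ} (hg : ∀ z, ‖g z‖ ≤ C * (1 + ‖z‖) ^ p)
    (hh : ∀ z, ‖h z‖ ≤ D * (1 + ‖z‖) ^ q) (z : E × E') :
    ‖g z.1 * h z.2‖ ≤ C * D * (1 + ‖z‖) ^ (p + q) := by
  have hC : 0 ≤ C := nonneg_of_mul_nonneg_left ((norm_nonneg _).trans (hg z.1)) (by positivity)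
  have hD : 0 ≤ D := nonneg_of_mul_nonneg_left ((norm_nonneg _).trans (hh z.2)) (by positivity)
  calc ‖g z.1 * h z.2‖ ≤ C * (1 + ‖z‖) ^ p * (D * (1 + ‖z‖) ^ q) := by
        grw [norm_mul_le, hg, hh, norm_fst_le z, norm_snd_le z]
    _ = C * D * (1 + ‖z‖) ^ (p + q) := by ring

theorem integral_dual_gaussianReal_prod (m m' : ℝ) (v v' : NNReal) (L : StrongDual ℝ (ℝ × ℝ)) :
    ∫ w, L w ∂(gaussianReal m v).prod (gaussianReal m' v') = L (m, m') := by
  rw [integral_continuousLinearMap_prod' (IsGaussian.integrable_dual _ _)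
    (IsGaussian.integrable_dual _ _), integral_continuousLinearMap_gaussianReal,
    integral_continuousLinearMap_gaussianReal, L.comp_inl_add_comp_inr (m, m')]

theorem cross_gamma_correlated_general
    {T σE σI ρ : ℝ} (hT : 0 < T) (hσE : σE ≠ 0) (hσI : σI ≠ 0) (hρ : ρ ∈ Set.Ioo (-1 : ℝ) 1)
    {Φ : ℝ × ℝ → ℝ} (hΦm : Measurable Φ) {C : ℝ} {p : ℕ}
    (hΦ : ∀ z, ‖Φ z‖ ≤ C * (1 + ‖z‖) ^ p) {x y : ℝ} (hx : x ≠ 0) (hy : y ≠ 0) :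
    (∀ y' : ℝ, DifferentiableAt ℝ (fun x' : ℝ ↦ ∫ w : ℝ × ℝ,
      Φ (x' * Real.exp (σE * w.1 - σE ^ 2 * T / 2),
        y' * Real.exp (σI * (ρ * w.1 + Real.sqrt (1 - ρ ^ 2) * w.2) - σI ^ 2 * T / 2))
      ∂((gaussianReal 0 T.toNNReal).prod (gaussianReal 0 T.toNNReal))) x) ∧
    HasDerivAt
      (fun y' : ℝ ↦ deriv (fun x' : ℝ ↦ ∫ w : ℝ × ℝ,
        Φ (x' * Real.exp (σE * w.1 - σE ^ 2 * T / 2),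
          y' * Real.exp (σI * (ρ * w.1 + Real.sqrt (1 - ρ ^ 2) * w.2) - σI ^ 2 * T / 2))
        ∂((gaussianReal 0 T.toNNReal).prod (gaussianReal 0 T.toNNReal))) x)
      (∫ w : ℝ × ℝ,
        Φ (x * Real.exp (σE * w.1 - σE ^ 2 * T / 2),
          y * Real.exp (σI * (ρ * w.1 + Real.sqrt (1 - ρ ^ 2) * w.2) - σI ^ 2 * T / 2)) *
        ((w.1 - ρ * w.2 / Real.sqrt (1 - ρ ^ 2)) * w.2 /
            (x * y * σE * σI * Real.sqrt (1 - ρ ^ 2) * T ^ 2) +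
          ρ / (x * y * σE * σI * (1 - ρ ^ 2) * T))
        ∂((gaussianReal 0 T.toNNReal).prod (gaussianReal 0 T.toNNReal))) y := by
  have hT' : T.toNNReal ≠ 0 := (Real.toNNReal_pos.2 hT).ne'
  have h_sq : 0 < 1 - ρ ^ 2 := by nlinarith [hρ.1, hρ.2]
  set s := Real.sqrt (1 - ρ ^ 2)
  have hs : s ≠ 0 := (Real.sqrt_pos.2 h_sq).ne'
  have hρs : 1 - ρ ^ 2 = s ^ 2 := (Real.sq_sqrt h_sq.le).symm
  let β : StrongDual ℝ (ℝ × ℝ) := σE • .fst ℝ ℝ ℝ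
  let β' : StrongDual ℝ (ℝ × ℝ) := σI • (ρ • .fst ℝ ℝ ℝ + s • .snd ℝ ℝ ℝ)
  have hk := IsCameronMartinVector.of_gaussianReal_prod 0 0 hT' hT' (σE⁻¹, -ρ / (s * σE))
  have hl := IsCameronMartinVector.of_gaussianReal_prod 0 0 hT' hT' (0, (s * σI)⁻¹)
  have hβk : β (σE⁻¹, -ρ / (s * σE)) = 1 := mul_inv_cancel₀ hσE
  have hβ'k : β' (σE⁻¹, -ρ / (s * σE)) = 0 := by
    change σI * (ρ * σE⁻¹ + s * (-ρ / (s * σE))) = 0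
    field_simp
    ring
  have hβl : β (0, (s * σI)⁻¹) = 0 := mul_zero σE
  have hβ'l : β' (0, (s * σI)⁻¹) = 1 := by
    change σI * (ρ * 0 + s * (s * σI)⁻¹) = 1
    field_simp
    ring
  refine ⟨fun y' ↦ (hasDerivAt_integral_lognormalPair_fst hk hβk hβ'k hx
      hΦm.stronglyMeasurable hΦ).differentiableAt,
    (hasDerivAt_deriv_integral_lognormalPair hk hl hβk hβ'k hβl hβ'l hx hy
      hΦm.stronglyMeasurable hΦ).congr_deriv ?_⟩
  rw [smul_smul, ← integral_smul]
  refine integral_congr_ae (.of_forall fun w ↦ ?_)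
  simp only [integral_dual_gaussianReal_prod, Prod.mk_zero_zero, map_zero, sub_zero, smul_smul, hρs]
  rw [smul_eq_mul, mul_comm]
  congr 1
  simp only [add_apply, smul_apply, ContinuousLinearMap.coe_fst', ContinuousLinearMap.coe_snd',
    smul_eq_mul, zero_div, zero_smul, zero_add, mul_zero, Real.coe_toNNReal _ hT.le]
  field_simp
  ring

/-- **Cross-gamma in the correlated lognormal futures model.**
The quanto option price `C(x,y) = ∫∫ g(Fᴱ(x,u)) h(Fᴵ(y,u,v)) dμ(u,v)` has a mixed second
partial derivative `∂²C/∂x∂y` at every `x > 0`, `y > 0`: for each fixed `y' > 0` the map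
`x ↦ C(x,y')` is differentiable at `x`, and `y' ↦ ∂C/∂x(x,y')` is differentiable at `y`,
with derivative given by the product of the energy-delta weight
`(u − (ρ/√(1−ρ²)) v)/(x σ_E T)` and the temperature-delta weight `v/(y σ_I √(1−ρ²) T)`,
plus the Skorohod correction `ρ/(x y σ_E σ_I (1−ρ²) T)`. -/
theorem cross_gamma_correlated
    (T σE σI ρ : ℝ) (hT : 0 < T) (hσE : 0 < σE) (hσI : 0 < σI)
    (hρ : ρ ∈ Set.Ioo (-1 : ℝ) 1)
    (g h : ℝ → ℝ) (hg : Measurable g) (hh : Measurable h)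
    (C : ℝ) (p : ℕ) (hC : 0 ≤ C)
    (hgb : ∀ z : ℝ, |g z| ≤ C * (1 + |z|) ^ p)
    (hhb : ∀ z : ℝ, |h z| ≤ C * (1 + |z|) ^ p)
    (x y : ℝ) (hx : 0 < x) (hy : 0 < y) :
    (∀ y' : ℝ, 0 < y' →
      DifferentiableAt ℝ
        (fun x' : ℝ =>
          ∫ w : ℝ × ℝ,
            g (x' * Real.exp (σE * w.1 - σE ^ 2 * T / 2)) *
              h (y' * Real.exp (σI * (ρ * w.1 + Real.sqrt (1 - ρ ^ 2) * w.2) - σI ^ 2 * T / 2))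
            ∂((gaussianReal 0 T.toNNReal).prod (gaussianReal 0 T.toNNReal))) x) ∧
    HasDerivAt
      (fun y' : ℝ =>
        deriv
          (fun x' : ℝ =>
            ∫ w : ℝ × ℝ,
              g (x' * Real.exp (σE * w.1 - σE ^ 2 * T / 2)) *
                h (y' * Real.exp (σI * (ρ * w.1 + Real.sqrt (1 - ρ ^ 2) * w.2) - σI ^ 2 * T / 2))
              ∂((gaussianReal 0 T.toNNReal).prod (gaussianReal 0 T.toNNReal))) x)
      (∫ w : ℝ × ℝ,
          g (x * Real.exp (σE * w.1 - σE ^ 2 * T / 2)) *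
            h (y * Real.exp (σI * (ρ * w.1 + Real.sqrt (1 - ρ ^ 2) * w.2) - σI ^ 2 * T / 2)) *
            ((w.1 - ρ * w.2 / Real.sqrt (1 - ρ ^ 2)) * w.2 /
                (x * y * σE * σI * Real.sqrt (1 - ρ ^ 2) * T ^ 2) +
              ρ / (x * y * σE * σI * (1 - ρ ^ 2) * T))
        ∂((gaussianReal 0 T.toNNReal).prod (gaussianReal 0 T.toNNReal)))
      y := by
  have h_meas : Measurable fun z : ℝ × ℝ ↦ g z.1 * h z.2 := by fun_prop
  exact (cross_gamma_correlated_general hT hσE.ne' hσI.ne' hρ h_meas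
    (norm_mul_le_mul_pow_norm hgb hhb) hx.ne' hy.ne').imp_left fun h_delta y' _ ↦ h_delta y'
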